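/- Let k > 0, C⊥ > 0, L > 0, β ∈ ℝ, ν₀ ∈ ℂ, and let W, F : ℝ × ℝ² × ℝ² → ℂ, (z, x⊥, p⊥) ↦ W(z,x⊥,p⊥), be smooth functions satisfying for all (z,x⊥,p⊥) the paraxial boundary-layer equation ∂_z W + p⊥·∇_{x⊥}W + iν₀W − F = (C⊥/(4k)) (∇_{p⊥} − iβx⊥)·(∇_{p⊥} − iβx⊥) W. Set ℓ_c = 2 k⁻¹ (L C⊥)^{−1/2}, σ* = (1/2) L^{3/2} C⊥^{1/2}, β̃ = β/β_c with β_c = 4 k⁻¹ C⊥⁻¹ L⁻², and define W̃(z̃, x̃, p̃) = W(Lk z̃, σ* k x̃, p̃/(k ℓ_c)) and F̃ likewise. Then W̃ satisfies for all (z̃, x̃, p̃) the normalized form ∂_z̃ W̃ + p̃·∇_x̃ W̃ + iLkν₀ W̃ − Lk F̃ = (∇_p̃ − iβ̃x̃)·(∇_p̃ − iβ̃x̃) W̃. (Thus the transverse spatial spread, transverse coherence length, and coherence bandwidth of the boundary layer scale as σ* ∼ L^{3/2}C⊥^{1/2}, ℓ_c ∼ k⁻¹L^{−1/2}C⊥^{−1/2},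 β_c ∼ k⁻¹C⊥⁻¹L⁻².) -/

import Mathlib

open MeasureTheory Complex Filter
open scoped RealInnerProductSpace Topology

noncomputable section

/-- The paraxial operator `(∇_{p⊥} − iβx⊥)·(∇_{p⊥} − iβx⊥)W
= Δ_{p⊥}W − 2iβ x⊥·∇_{p⊥}W − β²|x⊥|²W` acting on `W(z, x⊥, p⊥)`. -/
def parOp (β : ℝ)
    (W : ℝ → EuclideanSpace ℝ (Fin 2) → EuclideanSpace ℝ (Fin 2) → ℂ)
    (z : ℝ) (x p : EuclideanSpace ℝ (Fin 2)) : ℂ :=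
  (∑ j : Fin 2,
      fderiv ℝ (fun p' => fderiv ℝ (fun p'' => W z x p'') p' (EuclideanSpace.single j 1))
        p (EuclideanSpace.single j 1))
    - 2 * Complex.I * (β : ℂ) * fderiv ℝ (fun p' => W z x p') p x
    - ((β ^ 2 * ‖x‖ ^ 2 : ℝ) : ℂ) * W z x p

/-- Rescaling of the paraxial boundary-layer equation
`∂_z W + p⊥·∇_{x⊥}W + iν₀W − F = (C⊥/(4k))(∇_{p⊥} − iβx⊥)·(∇_{p⊥} − iβx⊥)W` with
`ℓ_c = 2k⁻¹(LC⊥)^{−1/2}`, `σ* = (1/2)L^{3/2}C⊥^{1/2}`, `β_c = 4k⁻¹C⊥⁻¹L⁻²`,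
`β̃ = β/β_c`, and `W̃(z̃,x̃,p̃) = W(Lk z̃, σ* k x̃, p̃/(kℓ_c))` (likewise `F̃`) yields the
normalized form
`∂_z̃W̃ + p̃·∇_x̃W̃ + iLkν₀W̃ − LkF̃ = (∇_p̃ − iβ̃x̃)·(∇_p̃ − iβ̃x̃)W̃`. -/
theorem paraxial_boundary_layer_rescaling
    (k CT L β : ℝ) (hk : 0 < k) (hCT : 0 < CT) (hL : 0 < L) (ν₀ : ℂ)
    (W F : ℝ → EuclideanSpace ℝ (Fin 2) → EuclideanSpace ℝ (Fin 2) → ℂ)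
    (hWsmooth : ContDiff ℝ (⊤ : ℕ∞)
      (fun q : ℝ × EuclideanSpace ℝ (Fin 2) × EuclideanSpace ℝ (Fin 2) => W q.1 q.2.1 q.2.2))
    (hFsmooth : ContDiff ℝ (⊤ : ℕ∞)
      (fun q : ℝ × EuclideanSpace ℝ (Fin 2) × EuclideanSpace ℝ (Fin 2) => F q.1 q.2.1 q.2.2))
    (heq : ∀ (z : ℝ) (x p : EuclideanSpace ℝ (Fin 2)),
      deriv (fun z' => W z' x p) z
          + fderiv ℝ (fun x' => W z x' p) x p
          + Complex.I * ν₀ * W z x p - F z x p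
        = ((CT / (4 * k) : ℝ) : ℂ) * parOp β W z x p)
    (ℓc σs βc βt : ℝ)
    (hℓc : ℓc = 2 * k⁻¹ * (Real.sqrt (L * CT))⁻¹)
    (hσs : σs = (1 / 2) * L ^ ((3 : ℝ) / 2) * Real.sqrt CT)
    (hβc : βc = 4 * k⁻¹ * CT⁻¹ * (L ^ 2)⁻¹)
    (hβt : βt = β / βc)
    (Wt Ft : ℝ → EuclideanSpace ℝ (Fin 2) → EuclideanSpace ℝ (Fin 2) → ℂ)
    (hWt : ∀ (zt : ℝ) (xt pt : EuclideanSpace ℝ (Fin 2)),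
      Wt zt xt pt = W (L * k * zt) ((σs * k) • xt) ((k * ℓc)⁻¹ • pt))
    (hFt : ∀ (zt : ℝ) (xt pt : EuclideanSpace ℝ (Fin 2)),
      Ft zt xt pt = F (L * k * zt) ((σs * k) • xt) ((k * ℓc)⁻¹ • pt)) :
    ∀ (zt : ℝ) (xt pt : EuclideanSpace ℝ (Fin 2)),
      deriv (fun z' => Wt z' xt pt) zt
          + fderiv ℝ (fun x' => Wt zt x' pt) xt pt
          + Complex.I * ((L * k : ℝ) : ℂ) * ν₀ * Wt zt xt pt
          - ((L * k : ℝ) : ℂ) * Ft zt xt pt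
        = parOp βt Wt zt xt pt := by
  have hc2 : ((k * ℓc)⁻¹) ^ 2 = L * CT / 4 := by
    have h := Real.sq_sqrt (mul_pos hL hCT).le
    have hp := Real.sqrt_pos.mpr (mul_pos hL hCT)
    rw [hℓc]
    field_simp
    nlinarith [h]
  have hb : σs * k = L * k * (k * ℓc)⁻¹ := by
    have h32 : L ^ ((3 : ℝ) / 2) = L * Real.sqrt L := by
      rw [Real.sqrt_eq_rpow, show (3 : ℝ) / 2 = 1 + 1 / 2 by norm_num, Real.rpow_add hL,
        Real.rpow_one]
    have hp := Real.sqrt_pos.mpr hL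
    have hp' := Real.sqrt_pos.mpr hCT
    rw [hσs, hℓc, h32, Real.sqrt_mul hL.le]
    field_simp
  have hβ : βt = β * (σs * k) * (k * ℓc)⁻¹ := by
    have : β * (σs * k) * (k * ℓc)⁻¹ = β * (L * k) * ((k * ℓc)⁻¹) ^ 2 := by rw [hb]; ring
    rw [this, hc2, hβt, hβc]
    field_simp
  obtain rfl : Wt = fun zt xt pt => W (L * k * zt) ((σs * k) • xt) ((k * ℓc)⁻¹ • pt) := by
    funext a b c; exact hWt a b c
  intro zt xt pt
  have h := heq (L * k * zt) ((σs * k) • xt) ((k * ℓc)⁻¹ • pt)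
  rw [hFt]
  clear hWt hFt heq hℓc hσs hβt hβc
  generalize (k * ℓc)⁻¹ = c at *
  generalize σs * k = b at *
  unfold parOp at *
  have e1 : deriv (fun z' => W (L * k * z') (b • xt) (c • pt)) zt
      = (L * k) • deriv (fun z' => W z' (b • xt) (c • pt)) (L * k * zt) :=
    deriv_comp_mul_left (L * k) (fun z' => W z' (b • xt) (c • pt)) zt
  have e2 : fderiv ℝ (fun x' => W (L * k * zt) (b • x') (c • pt)) xt
      = b • fderiv ℝ (fun x' => W (L * k * zt) x' (c • pt)) (b • xt) :=
    fderiv_comp_smul (f := fun x' => W (L * k * zt) x' (c • pt)) b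
  have e3 : ∀ p, fderiv ℝ (fun p' => W (L * k * zt) (b • xt) (c • p')) p
      = c • fderiv ℝ (fun p' => W (L * k * zt) (b • xt) p') (c • p) := fun p =>
    fderiv_comp_smul (f := fun p' => W (L * k * zt) (b • xt) p') c
  have e4 : ∀ v : EuclideanSpace ℝ (Fin 2),
      fderiv ℝ (fun p' => c • fderiv ℝ (fun p' => W (L * k * zt) (b • xt) p') (c • p') v) pt
      = c • c • fderiv ℝ (fun p' => fderiv ℝ (fun p' => W (L * k * zt) (b • xt) p') p' v)
        (c • pt) := by
    intro v
    rw [← fderiv_comp_smul (f := fun p' => fderiv ℝ (fun p' => W (L * k * zt) (b • xt) p') p' v) c]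
    exact congrFun (fderiv_const_smul_field (𝕜 := ℝ) (R := ℝ) c
      (f := fun p' => fderiv ℝ (fun p' => W (L * k * zt) (b • xt) p') (c • p') v)) pt
  simp only [e1, e2, e3, e4, _root_.smul_apply]
  simp only [_root_.smul_apply, map_smul, Complex.real_smul,
    Fin.sum_univ_two, norm_smul, mul_pow, Real.norm_eq_abs, sq_abs] at h ⊢
  have hc2' : (c : ℂ) ^ 2 = L * CT / 4 := by exact_mod_cast hc2
  have hk' : (k : ℂ) ≠ 0 := by exact_mod_cast hk.ne'
  subst hβ
  push_cast at h ⊢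
  have hLk : (b : ℂ) = L * k * c := by exact_mod_cast hb
  have hc3 : (L : ℂ) * k * (CT / (4 * k)) = c ^ 2 := by rw [hc2']; field_simp
  generalize (CT : ℂ) / (4 * k) = d at *
  rw [hLk] at h ⊢
  generalize fderiv ℝ (fun x' => W (L * k * zt) x' (c • pt)) (b • xt) pt = X1 at *
  generalize fderiv ℝ (fun p' => W (L * k * zt) (b • xt) p') (c • pt) xt = X2 at *
  generalize fderiv ℝ (fun p' => fderiv ℝ (fun p' => W (L * k * zt) (b • xt) p') p'
    (EuclideanSpace.single 0 1)) (c • pt) (EuclideanSpace.single 0 1) = X3 at *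
  generalize fderiv ℝ (fun p' => fderiv ℝ (fun p' => W (L * k * zt) (b • xt) p') p'
    (EuclideanSpace.single 1 1)) (c • pt) (EuclideanSpace.single 1 1) = X4 at *
  generalize W (L * k * zt) (b • xt) (c • pt) = X0 at *
  linear_combination (L * k : ℂ) * h + (X3 + X4 - 2 * I * β * (L * k * c * X2)
    - β ^ 2 * ((L * k * c) ^ 2 * (‖xt‖ : ℂ) ^ 2) * X0) * hc3
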